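/- arXiv:1006.3086 — 2 statements merged into one kernel-verified Lean document; each statement's English description precedes it below -/
import Mathlib

section
/- Let k ≥ 1 and let r₁ ≤ r₂ ≤ … ≤ r_k be integers with r₁ ≥ 1, and set n = k + r_k. Then there exists a unique fixed-point-free shuffle σ of {1,…,n} with parameter k such that σ(i) = i + r_i for all i with 1 ≤ i ≤ k (i.e. with Lorenz vector ⟨r₁,…,r_k⟩). -/
/-- `σ` is a shuffle of `{1,…,n}` with parameter `k` (encoded 0-based on `Fin n`). -/
def IsShuffle {n : ℕ} (k : ℕ) (σ : Equiv.Perm (Fin n)) : Prop :=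
  1 ≤ k ∧ k < n ∧
    (∀ i j : Fin n, i < j → (j : ℕ) < k → σ i < σ j) ∧
    (∀ i j : Fin n, i < j → k ≤ (i : ℕ) → σ i < σ j)

/-- `σ` has no fixed points. -/
def FixedPointFree {n : ℕ} (σ : Equiv.Perm (Fin n)) : Prop :=
  ∀ i, σ i ≠ i

theorem shuffle_aux_core {k m : ℕ} (hk : 1 ≤ k) (hk2 : k - 1 < k)
    (r : Fin k → ℕ) (hmono : Monotone r) (hpos : 1 ≤ r ⟨0, hk⟩)
    (hm : r ⟨k - 1, hk2⟩ = m) :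
    ∃! σ : Equiv.Perm (Fin (k + m)),
      IsShuffle k σ ∧ FixedPointFree σ ∧
        ∀ (i : Fin (k + m)) (h : (i : ℕ) < k), (σ i : ℕ) = (i : ℕ) + r ⟨i, h⟩ := by
  have hr1 : ∀ i, 1 ≤ r i := fun i => hpos.trans (hmono (Fin.mk_le_of_le_val (Nat.zero_le _)))
  have hrm : ∀ i, r i ≤ m := fun i => by
    rw [← hm]
    apply hmono
    rw [Fin.le_def]
    have := i.2
    simp only
    omega
  have hm1 : 1 ≤ m := (hr1 ⟨0, hk⟩).trans (hrm _)
  let f : Fin k → Fin (k + m) := fun i => ⟨i + r i, by have := hrm i; have := i.2; omega⟩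
  have hf : StrictMono f := fun i j hij => by
    have := hmono hij.le
    rw [Fin.lt_def] at hij ⊢
    simp only [f]
    omega
  let s : Finset (Fin (k + m)) := (Finset.univ.image f)ᶜ
  have hs : s.card = m := by
    simp only [s]
    rw [Finset.card_compl, Finset.card_image_of_injective _ hf.injective]
    simp
  have hsmem : ∀ x, x ∈ s ↔ ∀ i, f i ≠ x := fun x => by simp [s]
  let g := s.orderEmbOfFin hs
  have hgs : ∀ j i, f i ≠ g j := fun j => (hsmem _).1 (s.orderEmbOfFin_mem hs j)
  have hgm : StrictMono g := g.strictMono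
  have hstep : ∀ d (j : Fin m) (h : (j : ℕ) + d < m), (g j : ℕ) + d ≤ g ⟨j + d, h⟩ := by
    intro d
    induction d with
    | zero => intro j h; exact le_rfl
    | succ d ih =>
      intro j h
      have h1 := ih j (by omega)
      have h2 : g ⟨j + d, by omega⟩ < g ⟨j + (d + 1), h⟩ := hgm (by rw [Fin.lt_def]; simp)
      rw [Fin.lt_def] at h2
      omega
  have hglt : ∀ j : Fin m, (g j : ℕ) < k + j := by
    intro j
    have hj := j.2
    have h1 := hstep (m - 1 - j) j (by omega)
    have h2 := hgs ⟨j + (m - 1 - j), by omega⟩ ⟨k - 1, hk2⟩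
    rw [Ne, Fin.ext_iff] at h2
    simp only [f, hm] at h2
    have h3 := (g ⟨j + (m - 1 - j), by omega⟩).2
    omega
  let F : Fin (k + m) → Fin (k + m) := Fin.addCases f g
  have hFl : ∀ i, F (Fin.castAdd m i) = f i := fun i => Fin.addCases_left i
  have hFr : ∀ i, F (Fin.natAdd k i) = g i := fun i => Fin.addCases_right i
  have hF : Function.Injective F := by
    intro a b
    induction a using Fin.addCases with
    | left a =>
      induction b using Fin.addCases with
      | left b => rw [hFl, hFl]; intro h; rw [hf.injective h]
      | right b => rw [hFl, hFr]; intro h; exact absurd h (hgs b a)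
    | right a =>
      induction b using Fin.addCases with
      | left b => rw [hFl, hFr]; intro h; exact absurd h.symm (hgs a b)
      | right b => rw [hFr, hFr]; intro h; rw [hgm.injective h]
  refine ⟨Equiv.ofBijective F (Finite.injective_iff_bijective.1 hF),
    ⟨⟨hk, by omega, ?_, ?_⟩, ?_, ?_⟩, ?_⟩
  · intro i j hij hj
    have h1 := hFl ⟨i, by rw [Fin.lt_def] at hij; omega⟩
    have h2 := hFl ⟨j, hj⟩
    change F i = _ at h1
    change F j = _ at h2
    simp only [Equiv.ofBijective_apply, h1, h2]
    exact hf hij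
  · intro i j hij hi
    rw [Fin.lt_def] at hij
    obtain ⟨a, rfl⟩ : ∃ a, i = Fin.natAdd k a :=
      ⟨⟨i - k, by omega⟩, by ext; simp; omega⟩
    obtain ⟨b, rfl⟩ : ∃ a, j = Fin.natAdd k a :=
      ⟨⟨j - k, by omega⟩, by ext; simp; omega⟩
    simp only [Equiv.ofBijective_apply, hFr]
    apply hgm
    simpa using hij
  · intro i
    rw [Equiv.ofBijective_apply, Ne, Fin.ext_iff]
    induction i using Fin.addCases with
    | left a => rw [hFl]; have := hr1 a; simp only [f, Fin.val_castAdd]; omega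
    | right a => rw [hFr]; have := hglt a; simp only [Fin.val_natAdd]; omega
  · intro i h
    have h1 := hFl ⟨i, h⟩
    change F i = _ at h1
    rw [Equiv.ofBijective_apply, h1]
  · rintro τ ⟨⟨-, -, -, h4⟩, -, hτ⟩
    have hτl : ∀ a, τ (Fin.castAdd m a) = f a := fun a => by
      ext
      rw [hτ _ (by simp)]
      simp [f]
    have key : (fun a => τ (Fin.natAdd k a)) = g := by
      apply Finset.orderEmbOfFin_unique hs
      · intro a
        rw [hsmem]
        intro i h
        rw [← hτl] at h
        have := congrArg Fin.val (τ.injective h)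
        simp at this
        omega
      · intro a b hab
        exact h4 _ _ (by simpa using hab) (by simp)
    ext1 i
    rw [Equiv.ofBijective_apply]
    induction i using Fin.addCases with
    | left a => rw [hFl, hτl]
    | right a => rw [hFr]; exact congrFun key a

/-- Every nondecreasing sequence `r₁ ≤ … ≤ r_k` of positive integers is the Lorenz
vector of a unique fixed-point-free shuffle of `{1,…,n}` with parameter `k`, where
`n = k + r_k`. -/
theorem exists_unique_shuffle_of_lorenzVector {k : ℕ} (hk : 1 ≤ k)
    (r : Fin k → ℕ) (hmono : Monotone r) (hpos : 1 ≤ r ⟨0, hk⟩)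
    {n : ℕ} (hn : n = k + r ⟨k - 1, by omega⟩) :
    ∃! σ : Equiv.Perm (Fin n),
      IsShuffle k σ ∧ FixedPointFree σ ∧
        ∀ (i : Fin n) (h : (i : ℕ) < k), (σ i : ℕ) = (i : ℕ) + r ⟨i, h⟩ := by
  subst hn
  exact shuffle_aux_core hk _ r hmono hpos rfl
end

section
/- Let σ be a fixed-point-free shuffle of {1,…,n} with parameter k and Lorenz vector ⟨p₁^{q₁}, …, p_s^{q₁}⟩ (so p₁ < … < p_s = n − k and q₁ + … + q_s = k). For 2 ≤ p ≤ p_s, let ρ_p denote the p-cycle on {1,…,p_s} sending 1 ↦ p and i ↦ i − 1 for 2 ≤ i ≤ p, and fixing all i > p. Set τ = ρ_{p₁}^{q₁} ∘ ρ_{p₂}^{q₂} ∘ ⋯ ∘ ρ_{p_s}^{q_s}, a permutation of {1,…,p_s}. Then the number of orbits of the cyclic group generated by σ acting on {1,…,n} equals the number of orbits of the cyclic group generated by τ acting on {1,…,p_s}. (This is the equality of the number of components of the Lorenz link of σ and of the T-link T((p₁,q₁),…,(p_s,q_s)), which are isotopic by the Birman–Kofman correspondence.) -/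
/-- The number of orbits of the cyclic group generated by `σ` acting on `Fin n`,
i.e. the number of equivalence classes of the "same cycle" relation of `σ`. -/
def numOrbits {n : ℕ} (σ : Equiv.Perm (Fin n)) : ℕ :=
  (Finset.univ.image fun i : Fin n =>
    Finset.univ.filter fun j : Fin n => σ.SameCycle i j).card

/-- The cycle `ρ_p` on `{1,…,m}` (for `p ≤ m`) sending `1 ↦ p`, `i ↦ i - 1` for
`2 ≤ i ≤ p`, and fixing all `i > p`; 0-based on `Fin m` it sends `0 ↦ p - 1`,
`i ↦ i - 1` for `1 ≤ i < p`, and fixes `i ≥ p`. -/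
def rho (m p : ℕ) (h : p ≤ m) : Equiv.Perm (Fin m) :=
  Equiv.Perm.extendDomain (finRotate p).symm
    (⟨fun i => ⟨⟨(i : ℕ), lt_of_lt_of_le i.isLt h⟩, i.isLt⟩,
      fun x => ⟨(x : Fin m), x.2⟩, fun _ => rfl, fun _ => rfl⟩ :
      Fin p ≃ {x : Fin m // (x : ℕ) < p})

namespace LorenzAux

lemma sameCycle_map {α β : Type*} [Finite α] (σ : Equiv.Perm α) (τ : Equiv.Perm β) (g : α → β)
    (h : ∀ x, τ.SameCycle (g x) (g (σ x))) {x y : α} (hxy : σ.SameCycle x y) :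
    τ.SameCycle (g x) (g y) := by
  obtain ⟨i, rfl⟩ := hxy.exists_nat_pow_eq
  clear hxy
  induction i with
  | zero => exact Equiv.Perm.SameCycle.refl _ _
  | succ i ih =>
    rw [pow_succ', Equiv.Perm.mul_apply]
    exact ih.trans (h _)

lemma numOrbits_eq {n : ℕ} (σ : Equiv.Perm (Fin n)) :
    numOrbits σ = Nat.card (Quotient (Equiv.Perm.SameCycle.setoid σ)) := by
  classical
  unfold numOrbits
  let F : Quotient (Equiv.Perm.SameCycle.setoid σ) → Finset (Fin n) :=
    Quotient.lift (fun i : Fin n => Finset.univ.filter fun j : Fin n => σ.SameCycle i j) (by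
      intro a b hab
      have hab' : σ.SameCycle a b := hab
      ext j
      simp only [Finset.mem_filter, Finset.mem_univ, true_and]
      exact ⟨fun h => hab'.symm.trans h, fun h => hab'.trans h⟩)
  have hF : Function.Injective F := by
    intro a b
    induction a using Quotient.inductionOn
    induction b using Quotient.inductionOn
    rename_i a b
    intro h
    apply Quotient.sound
    have h' : (Finset.univ.filter fun j : Fin n => σ.SameCycle a j)
      = Finset.univ.filter fun j : Fin n => σ.SameCycle b j := h
    have : b ∈ (Finset.univ.filter fun j : Fin n => σ.SameCycle a j) := by
      rw [h', Finset.mem_filter]; exact ⟨Finset.mem_univ _, Equiv.Perm.SameCycle.refl _ _⟩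
    show σ.SameCycle a b
    simpa using this
  have : (Finset.univ.image fun i : Fin n =>
      Finset.univ.filter fun j : Fin n => σ.SameCycle i j) = Finset.univ.image F := by
    ext s
    simp only [Finset.mem_image, Finset.mem_univ, true_and]
    constructor
    · rintro ⟨a, rfl⟩; exact ⟨Quotient.mk _ a, rfl⟩
    · rintro ⟨a, rfl⟩
      induction a using Quotient.inductionOn
      rename_i a
      exact ⟨a, rfl⟩
  rw [this, Finset.card_image_of_injective _ hF, Nat.card_eq_fintype_card, Finset.card_univ]

lemma numOrbits_congr {n m : ℕ} (σ : Equiv.Perm (Fin n)) (τ : Equiv.Perm (Fin m))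
    (g : Fin n → Fin m) (e : Fin m → Fin n)
    (hg : ∀ x, τ.SameCycle (g x) (g (σ x))) (he : ∀ r, σ.SameCycle (e r) (e (τ r)))
    (hge : ∀ r, g (e r) = r) (heg : ∀ x, σ.SameCycle (e (g x)) x) :
    numOrbits σ = numOrbits τ := by
  rw [numOrbits_eq, numOrbits_eq]
  refine Nat.card_congr ⟨Quotient.map g (fun a b h => sameCycle_map σ τ g hg h),
    Quotient.map e (fun a b h => sameCycle_map τ σ e he h), ?_, ?_⟩
  · intro a
    induction a using Quotient.inductionOn
    exact Quotient.sound (heg _)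
  · intro a
    induction a using Quotient.inductionOn
    simp [hge]

/-- total version of `rho` -/
def R (m p : ℕ) : Equiv.Perm (Fin m) := if h : p ≤ m then rho m p h else Equiv.refl _

lemma rho_val (m p : ℕ) (h : p ≤ m) (r : Fin m) :
    (rho m p h r : ℕ) = if (r : ℕ) < p then (if (r : ℕ) = 0 then p - 1 else r - 1) else r := by
  unfold rho
  split_ifs with h1 h2
  · rw [Equiv.Perm.extendDomain_apply_subtype (p := fun x : Fin m => (x : ℕ) < p) _ _ h1]
    cases p with
    | zero => omega
    | succ p =>
      have : ((⟨(r : ℕ), h1⟩ : Fin (p+1))) = 0 := by ext; simpa using h2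
      simp only [Equiv.coe_fn_symm_mk, Equiv.coe_fn_mk]
      rw [this]
      have : (finRotate (p+1)).symm 0 = Fin.last p := by
        rw [Equiv.symm_apply_eq]; simp
      rw [this]; simp
  · rw [Equiv.Perm.extendDomain_apply_subtype (p := fun x : Fin m => (x : ℕ) < p) _ _ h1]
    cases p with
    | zero => omega
    | succ p =>
      simp only [Equiv.coe_fn_symm_mk, Equiv.coe_fn_mk]
      have : (finRotate (p+1)).symm ⟨(r : ℕ), h1⟩ = ⟨r - 1, by omega⟩ := by
        rw [Equiv.symm_apply_eq]
        rw [finRotate_of_lt (by omega)]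
        ext; simp; omega
      rw [this]
  · rw [Equiv.Perm.extendDomain_apply_not_subtype (p := fun x : Fin m => (x : ℕ) < p) _ _ h1]

lemma strictMono_initial {m n : ℕ} (f : Fin m → Fin n) (hf : StrictMono f) (i d : ℕ)
    (hi : ∀ r, i ≤ (f r : ℕ))
    (hd : ∀ x : Fin n, i ≤ (x : ℕ) → (x : ℕ) < i + d → ∃ r, f r = x) (hdn : i + d ≤ n) :
    (∀ r : Fin m, i + r ≤ (f r : ℕ)) ∧ (∀ r : Fin m, (r : ℕ) < d → (f r : ℕ) = i + r) := by
  have h1 : ∀ t : ℕ, ∀ ht : t < m, i + t ≤ (f ⟨t, ht⟩ : ℕ) := by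
    intro t
    induction t with
    | zero => intro ht; exact hi _
    | succ t ih =>
      intro ht
      have := ih (by omega)
      have h2 : f ⟨t, by omega⟩ < f ⟨t+1, ht⟩ := hf (by simp)
      have h3 : (f ⟨t, by omega⟩ : ℕ) < f ⟨t+1, ht⟩ := h2
      omega
  refine ⟨fun r => h1 r r.2, ?_⟩
  have h2 : ∀ t : ℕ, ∀ ht : t < m, t < d → (f ⟨t, ht⟩ : ℕ) = i + t := by
    intro t
    induction t using Nat.strong_induction_on with
    | _ t ih =>
      intro ht htd
      obtain ⟨r, hr⟩ := hd ⟨i + t, by omega⟩ (by simp) (by simp; omega)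
      have hrv : (f r : ℕ) = i + t := by rw [hr]
      have h4 := h1 r r.2
      simp only [Fin.eta] at h4
      rcases Nat.lt_or_ge r t with h5 | h5
      · have := ih r h5 r.2 (by omega)
        simp only [Fin.eta] at this
        omega
      · have : r = ⟨t, ht⟩ := by ext; simp; omega
        rw [← this, hrv]
  exact fun r hr => h2 r r.2 hr

/-- one-step move -/
def move {n : ℕ} (σ : Equiv.Perm (Fin n)) (i : ℕ) (x : Fin n) : Fin n :=
  if (x : ℕ) = i then σ x else x

def Inv {n : ℕ} (k : ℕ) (σ : Equiv.Perm (Fin n)) {m : ℕ} (i : ℕ) (f : Fin m → Fin n) : Prop :=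
  StrictMono f ∧ ∀ x : Fin n, (∃ r, f r = x) ↔
    (i ≤ (x : ℕ) ∧ ∀ j : Fin n, i ≤ (j : ℕ) → (j : ℕ) < k → σ j ≠ x)

lemma step {n k m : ℕ} (σ : Equiv.Perm (Fin n))
    (hmono : ∀ i j : Fin n, i < j → (j : ℕ) < k → σ i < σ j)
    (hgt : ∀ i : Fin n, (i : ℕ) < k → i < σ i)
    (i : Fin n) (hik : (i : ℕ) < k) (f : Fin m → Fin n) (hf : Inv k σ i f)
    (hdm : (σ i : ℕ) - i ≤ m) :
    ∃ f' : Fin m → Fin n, Inv k σ (i + 1) f' ∧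
      ∀ r, f' (R m ((σ i : ℕ) - i) r) = move σ i (f r) := by
  obtain ⟨hsm, hr⟩ := hf
  have hgti : (i : ℕ) < σ i := hgt i hik
  have hle : ∀ j : Fin n, (i : ℕ) ≤ j → (j : ℕ) < k → (σ i : ℕ) ≤ σ j := by
    intro j hj hjk
    rcases Nat.lt_or_ge i j with h | h
    · exact le_of_lt (hmono i j h hjk)
    · have : i = j := by ext; omega
      rw [this]
  have hlt : ∀ j : Fin n, (i : ℕ) + 1 ≤ j → (j : ℕ) < k → (σ i : ℕ) < σ j := by
    intro j hj hjk
    exact hmono i j (by rw [Fin.lt_def]; omega) hjk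
  obtain ⟨d, hd⟩ : ∃ d, d = (σ i : ℕ) - i := ⟨_, rfl⟩
  rw [← hd] at hdm ⊢
  have hmem : ∀ r, (i : ℕ) ≤ f r ∧ ∀ j : Fin n, (i : ℕ) ≤ (j : ℕ) → (j : ℕ) < k → σ j ≠ f r :=
    fun r => (hr (f r)).1 ⟨r, rfl⟩
  have hσn := (σ i).2
  obtain ⟨h1, h2⟩ := strictMono_initial f hsm i d (fun r => (hmem r).1) (by
    intro x hx hxd
    rw [hr]
    refine ⟨hx, fun j hj hjk h => ?_⟩
    have := hle j hj hjk
    rw [h] at this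
    omega) (by omega)
  have h3 : ∀ r : Fin m, d ≤ r → (σ i : ℕ) < f r := by
    intro r hrd
    have a := h1 r
    have b := (hmem r).2 i le_rfl hik
    have c : (σ i : ℕ) ≠ f r := fun h => b (Fin.ext h)
    omega
  let f' : Fin m → Fin n := fun s => if h : (s : ℕ) < d then ⟨i + 1 + s, by omega⟩ else f s
  have hf1 : ∀ s : Fin m, (s : ℕ) < d → (f' s : ℕ) = i + 1 + s := by
    intro s hs; simp [f', hs]
  have hf2 : ∀ s : Fin m, ¬ (s : ℕ) < d → f' s = f s := by
    intro s hs; simp [f', hs]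
  refine ⟨f', ⟨?_, ?_⟩, ?_⟩
  · intro s t hst
    have hst' : (s : ℕ) < t := hst
    rw [Fin.lt_def]
    by_cases hs : (s : ℕ) < d <;> by_cases ht : (t : ℕ) < d
    · rw [hf1 s hs, hf1 t ht]; omega
    · rw [hf1 s hs, hf2 t ht]
      have := h3 t (by omega)
      omega
    · omega
    · rw [hf2 s hs, hf2 t ht]; exact hsm hst
  · intro x
    constructor
    · rintro ⟨s, rfl⟩
      by_cases hs : (s : ℕ) < d
      · have := hf1 s hs
        refine ⟨by omega, fun j hj hjk h => ?_⟩
        have := hlt j hj hjk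
        rw [h] at this
        omega
      · rw [hf2 s hs]
        have := h3 s (by omega)
        refine ⟨by omega, fun j hj hjk h => ?_⟩
        exact (hmem s).2 j (by omega) hjk h
    · rintro ⟨hx, hxj⟩
      by_cases hxs : (x : ℕ) ≤ σ i
      · refine ⟨⟨x - i - 1, by omega⟩, ?_⟩
        ext
        rw [hf1 _ (by simp; omega)]
        simp; omega
      · obtain ⟨r, hrx⟩ := (hr x).2 ⟨by omega, by
          intro j hj hjk h
          rcases Nat.lt_or_ge i j with h' | h'
          · exact hxj j h' hjk h
          · have : i = j := by ext; omega
            rw [← this] at h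
            rw [h] at hxs
            omega⟩
        refine ⟨r, ?_⟩
        rw [hf2 r, hrx]
        intro hrd
        have := h2 r hrd
        rw [hrx] at this
        omega
  · intro r
    have hR : (R m d r : ℕ) = if (r : ℕ) < d then (if (r : ℕ) = 0 then d - 1 else r - 1) else r := by
      unfold R
      rw [dif_pos hdm, rho_val]
    unfold move
    by_cases hrd : (r : ℕ) < d
    · have hfr := h2 r hrd
      by_cases hr0 : (r : ℕ) = 0
      · rw [if_pos hrd, if_pos hr0] at hR
        have : f r = i := by ext; omega
        rw [this, if_pos rfl]
        ext
        rw [hf1 _ (by omega)]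
        omega
      · rw [if_pos hrd, if_neg hr0] at hR
        rw [if_neg (by omega)]
        ext
        rw [hf1 _ (by omega)]
        omega
    · rw [if_neg hrd] at hR
      have : R m d r = r := Fin.ext hR
      have := h3 r (by omega)
      rw [if_neg (by omega), hf2 _ (by omega)]
      congr 1

/-- displacement -/
def disp {n : ℕ} (σ : Equiv.Perm (Fin n)) (i : ℕ) : ℕ :=
  if h : i < n then (σ ⟨i, h⟩ : ℕ) - i else 0

/-- T-link permutation from list of displacements -/
def T (m : ℕ) (l : List ℕ) : Equiv.Perm (Fin m) :=
  l.foldl (fun e d => e.trans (R m d)) (Equiv.refl _)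

lemma exists_f {n k m : ℕ} (σ : Equiv.Perm (Fin n)) (hmk : m + k = n)
    (hmono : ∀ i j : Fin n, i < j → (j : ℕ) < k → σ i < σ j)
    (hmono2 : ∀ i j : Fin n, i < j → k ≤ (i : ℕ) → σ i < σ j)
    (hgt : ∀ i : Fin n, (i : ℕ) < k → i < σ i)
    (hdm : ∀ i : Fin n, (i : ℕ) < k → (σ i : ℕ) - i ≤ m)
    (g : Fin n → Fin m) (hg : ∀ x : Fin n, (x : ℕ) < k → g (σ x) = g x)
    (i : ℕ) (hi : i ≤ k) :
    ∃ f : Fin m → Fin n, Inv k σ i f ∧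
      ∀ r, g (f (T m ((List.range i).map (disp σ)) r)) = g (σ ⟨k + r, by omega⟩) ∧
        σ.SameCycle ⟨k + r, by omega⟩ (f (T m ((List.range i).map (disp σ)) r)) := by
  induction i with
  | zero =>
    refine ⟨fun r => σ ⟨k + r, by omega⟩, ⟨?_, ?_⟩, ?_⟩
    · intro r s hrs
      apply hmono2
      · rw [Fin.lt_def] at *; simpa using hrs
      · simp
    · intro x
      constructor
      · rintro ⟨r, rfl⟩
        refine ⟨by simp, fun j _ hj h => ?_⟩
        have := σ.injective h
        rw [this] at hj
        simp at hj
      · rintro ⟨_, h⟩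
        have h1 : ¬ ((σ.symm x : ℕ) < k) := fun h' => h (σ.symm x) (by simp) h' (by simp)
        have := (σ.symm x).2
        refine ⟨⟨σ.symm x - k, by omega⟩, ?_⟩
        rw [← Equiv.eq_symm_apply]
        ext
        simp; omega
    · intro r
      refine ⟨by simp [T], ?_⟩
      simp [T]
      exact Equiv.Perm.SameCycle.refl _ _
  | succ i ih =>
    obtain ⟨f, hf, hfr⟩ := ih (by omega)
    obtain ⟨f', hf', hmv⟩ := step σ hmono hgt ⟨i, by omega⟩ (by simp; omega) f hf
      (hdm _ (by simp; omega))
    refine ⟨f', hf', fun r => ?_⟩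
    have hT : T m ((List.range (i+1)).map (disp σ)) r
        = R m (disp σ i) (T m ((List.range i).map (disp σ)) r) := by
      simp [T, List.range_succ, List.foldl_append]
    have hdisp : disp σ i = (σ ⟨i, by omega⟩ : ℕ) - i := by
      rw [disp, dif_pos (by omega)]
    rw [hT, hdisp]
    rw [hmv]
    obtain ⟨ha, hb⟩ := hfr r
    rw [← ha]
    unfold move
    split_ifs with h
    · refine ⟨hg _ (by rw [h]; simp; omega), ?_⟩
      rw [Equiv.Perm.sameCycle_apply_right]
      exact hb
    · exact ⟨rfl, hb⟩

/-- the first point in the right block reached by iterating -/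
def ret {n : ℕ} (k : ℕ) (σ : Equiv.Perm (Fin n)) (x : Fin n) : Fin n :=
  if h : (x : ℕ) < k ∧ x < σ x then ret k σ (σ x) else x
termination_by n - (x : ℕ)
decreasing_by
  have := h.2
  rw [Fin.lt_def] at this
  have := (σ x).2
  omega

lemma ret_spec {n : ℕ} (k : ℕ) (σ : Equiv.Perm (Fin n))
    (hgt : ∀ i : Fin n, (i : ℕ) < k → i < σ i) (x : Fin n) :
    k ≤ (ret k σ x : ℕ) ∧ σ.SameCycle (ret k σ x) x := by
  induction x using ret.induct k σ with
  | case1 x h ih =>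
    rw [ret, dif_pos h]
    exact ⟨ih.1, by rw [← Equiv.Perm.sameCycle_apply_right]; exact ih.2⟩
  | case2 x h =>
    rw [ret, dif_neg h]
    refine ⟨?_, Equiv.Perm.SameCycle.refl _ _⟩
    by_contra h'
    exact h ⟨by omega, hgt x (by omega)⟩

lemma main {n k m : ℕ} (σ : Equiv.Perm (Fin n)) (hmk : m + k = n)
    (hmono : ∀ i j : Fin n, i < j → (j : ℕ) < k → σ i < σ j)
    (hmono2 : ∀ i j : Fin n, i < j → k ≤ (i : ℕ) → σ i < σ j)
    (hgt : ∀ i : Fin n, (i : ℕ) < k → i < σ i)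
    (hdm : ∀ i : Fin n, (i : ℕ) < k → (σ i : ℕ) - i ≤ m) :
    numOrbits σ = numOrbits (T m ((List.range k).map (disp σ))) := by
  let g : Fin n → Fin m := fun x => ⟨ret k σ x - k, by
    have := (ret_spec k σ hgt x).1
    have := (ret k σ x).2
    omega⟩
  have hg : ∀ x : Fin n, (x : ℕ) < k → g (σ x) = g x := by
    intro x hx
    have h1 : ret k σ x = ret k σ (σ x) := by
      rw [ret.eq_def k σ x, dif_pos ⟨hx, hgt x hx⟩]
    ext
    simp only [g]
    rw [h1]
  let e : Fin m → Fin n := fun r => ⟨k + r, by omega⟩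
  have hge : ∀ r, g (e r) = r := by
    intro r
    ext
    simp only [g, e]
    rw [ret, dif_neg (by simp)]
    simp
  have heg : ∀ x, σ.SameCycle (e (g x)) x := by
    intro x
    obtain ⟨h1, h2⟩ := ret_spec k σ hgt x
    have : e (g x) = ret k σ x := by
      ext; simp only [e, g]; omega
    rw [this]; exact h2
  obtain ⟨f, ⟨hsm, hr⟩, hf⟩ := exists_f σ hmk hmono hmono2 hgt hdm g hg k le_rfl
  have hfe : ∀ r, f r = e r := by
    intro r
    ext
    refine (strictMono_initial f hsm k m (fun r => ((hr _).1 ⟨r, rfl⟩).1) ?_ (by omega)).2 r r.2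
    intro x hx _
    exact (hr x).2 ⟨hx, fun j h1 h2 => by omega⟩
  refine numOrbits_congr σ _ g e ?_ ?_ hge heg
  · intro x
    by_cases hx : (x : ℕ) < k
    · rw [hg x hx]
    · have hxe : x = e ⟨x - k, by omega⟩ := by ext; simp [e]; omega
      rw [hxe, hge]
      have := (hf ⟨x - k, by omega⟩).1
      rw [hfe, hge] at this
      have h2 : g (σ (e ⟨x - k, by omega⟩)) = _ := this.symm
      rw [h2, Equiv.Perm.sameCycle_apply_right]
  · intro r
    have := (hf r).2
    rw [hfe] at this
    exact this

lemma T_flatten (m s : ℕ) (p q : Fin s → ℕ) (hp : ∀ j, p j ≤ m) :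
    (List.ofFn fun j : Fin s => ((rho m (p j) (hp j)) ^ (q j) : Equiv.Perm (Fin m))).foldl
        Equiv.trans (Equiv.refl _)
      = T m ((List.ofFn fun j => List.replicate (q j) (p j)).flatten) := by
  unfold T
  rw [List.foldl_flatten]
  have hrep : ∀ (a b : ℕ) (e : Equiv.Perm (Fin m)),
      (List.replicate a b).foldl (fun e d => e.trans (R m d)) e = e.trans ((R m b) ^ a) := by
    intro a b
    induction a with
    | zero => intro e; rfl
    | succ a ih =>
      intro e
      rw [List.replicate_succ, List.foldl_cons, ih, pow_succ]
      rfl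
  rw [List.ofFn_eq_map, List.ofFn_eq_map, List.foldl_map, List.foldl_map]
  congr 1
  funext e j
  rw [hrep]
  simp [R, hp j]

lemma list_eq {n k s : ℕ} (σ : Equiv.Perm (Fin n)) (hk : k < n)
    (hmono : ∀ i j : Fin n, i < j → (j : ℕ) < k → σ i < σ j)
    (p q : Fin s → ℕ) (hp : StrictMono p)
    (hcount : ∀ j, (Finset.univ.filter fun i : Fin n =>
        (i : ℕ) < k ∧ (σ i : ℕ) - (i : ℕ) = p j).card = q j)
    (hcover : ∀ i : Fin n, (i : ℕ) < k → ∃ j, (σ i : ℕ) - (i : ℕ) = p j) :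
    (List.range k).map (disp σ) = (List.ofFn fun j => List.replicate (q j) (p j)).flatten := by
  have hdisp : ∀ i (h : i < n), disp σ i = (σ ⟨i, h⟩ : ℕ) - i := fun i h => by
    rw [disp, dif_pos h]
  have hcnt : ∀ a, ((List.range k).map (disp σ)).count a = (Finset.univ.filter fun i : Fin n =>
        (i : ℕ) < k ∧ (σ i : ℕ) - (i : ℕ) = a).card := by
    intro a
    have : ((List.range k).map (disp σ)).count a
        = ((Finset.range k).filter fun i => disp σ i = a).card := by
      rw [List.count, List.countP_map, List.countP_eq_length_filter]
      have : ((Finset.range k).filter fun i => disp σ i = a)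
        = ((List.range k).filter fun i => disp σ i = a).toFinset := by
        ext; simp
      rw [this, List.toFinset_card_of_nodup (List.nodup_range.filter _)]
      congr 1
    rw [this]
    symm
    refine Finset.card_bij (fun i _ => (i : ℕ)) ?_ ?_ ?_
    · intro i hi
      simp at hi ⊢
      exact ⟨hi.1, by rw [hdisp i i.2]; exact hi.2⟩
    · intro i _ j _ h; exact Fin.ext h
    · intro i hi
      simp at hi
      refine ⟨⟨i, by omega⟩, ?_, rfl⟩
      simp
      exact ⟨hi.1, by rw [← hdisp]; exact hi.2⟩
  have hperm : ((List.range k).map (disp σ)).Perm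
      (List.ofFn fun j => List.replicate (q j) (p j)).flatten := by
    rw [List.perm_iff_count]
    intro a
    rw [hcnt, List.count_flatten, List.map_ofFn, List.sum_ofFn]
    simp only [Function.comp, List.count_replicate]
    by_cases ha : ∃ j, p j = a
    · obtain ⟨j, rfl⟩ := ha
      rw [hcount, Finset.sum_eq_single j]
      · simp
      · intro b _ hb
        have := hp.injective.ne hb
        simp [this]
      · simp
    · push Not at ha
      rw [Finset.sum_eq_zero (by intro j _; simp [ha j]), Finset.card_eq_zero]
      rw [Finset.filter_eq_empty_iff]
      rintro i _ ⟨h1, h2⟩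
      obtain ⟨j, hj⟩ := hcover i h1
      exact ha j (by omega)
  refine hperm.eq_of_pairwise (le := (· ≤ ·)) (fun a b _ _ h1 h2 => le_antisymm h1 h2) ?_ ?_
  · rw [List.pairwise_map]
    refine List.pairwise_lt_range.imp_of_mem ?_
    intro i j hi hj hij
    rw [List.mem_range] at hi hj
    have key : ∀ t, i + t < k → disp σ i ≤ disp σ (i + t) := by
      intro t
      induction t with
      | zero => intro _; exact le_rfl
      | succ t ih =>
        intro ht
        refine (ih (by omega)).trans ?_
        rw [hdisp _ (by omega), hdisp _ (by omega)]
        have : (σ ⟨i + t, by omega⟩ : ℕ) < σ ⟨i + (t + 1), by omega⟩ :=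
          hmono ⟨i + t, by omega⟩ ⟨i + (t + 1), by omega⟩ (by rw [Fin.lt_def]; simp) (by simpa using ht)
        omega
    have := key (j - i) (by omega)
    rwa [show i + (j - i) = j by omega] at this
  · rw [List.pairwise_flatten]
    refine ⟨?_, ?_⟩
    · intro l hl
      rw [List.mem_ofFn] at hl
      obtain ⟨j, rfl⟩ := hl
      rw [List.pairwise_replicate]
      exact Or.inr le_rfl
    · rw [List.pairwise_ofFn]
      intro i j hij x hx y hy
      rw [List.mem_replicate] at hx hy
      rw [hx.2, hy.2]
      exact hp.monotone hij.le

lemma gt_of {n k : ℕ} (σ : Equiv.Perm (Fin n)) (hfpf : FixedPointFree σ)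
    (hmono : ∀ i j : Fin n, i < j → (j : ℕ) < k → σ i < σ j) :
    ∀ i : Fin n, (i : ℕ) < k → i < σ i := by
  have h : ∀ t (ht : t < n), t < k → t ≤ (σ ⟨t, ht⟩ : ℕ) := by
    intro t
    induction t with
    | zero => intros; omega
    | succ t ih =>
      intro ht htk
      have h1 := ih (by omega) (by omega)
      have : (σ ⟨t, by omega⟩ : ℕ) < σ ⟨t + 1, ht⟩ :=
        hmono ⟨t, by omega⟩ ⟨t + 1, ht⟩ (by rw [Fin.lt_def]; simp) (by simpa using htk)
      omega
  intro i hi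
  exact lt_of_le_of_ne (h i i.2 hi) (hfpf i).symm

end LorenzAux

/-- Birman–Kofman correspondence on the level of components: if `σ` is a
fixed-point-free shuffle with Lorenz vector `⟨p₁^{q₁}, …, p_s^{q_s}⟩`
(`p₁ < … < p_s = n - k`), then `σ` acting on `{1,…,n}` and
`τ = ρ_{p₁}^{q₁} ∘ ρ_{p₂}^{q₂} ∘ ⋯ ∘ ρ_{p_s}^{q_s}` acting on `{1,…,p_s}` have the
same number of orbits: the Lorenz link of `σ` and the T-link
`T((p₁,q₁),…,(p_s,q_s))` have the same number of components. Here `τ` is the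
underlying permutation of the T-braid word
`(σ₁⋯σ_{p₁-1})^{q₁} ⋯ (σ₁⋯σ_{p_s-1})^{q_s}`, whose factors compose in braid-word
order (the leftmost factor `ρ_{p₁}^{q₁}` acts on the strands first); this
left-to-right composition is encoded by folding with `Equiv.trans`. -/
theorem numOrbits_lorenz_eq_numOrbits_tlink {n k s : ℕ} (hn : 2 ≤ n) (hs : 1 ≤ s)
    (σ : Equiv.Perm (Fin n)) (hσ : IsShuffle k σ) (hfpf : FixedPointFree σ)
    (p q : Fin s → ℕ) (hp : StrictMono p) (hq : ∀ j, 1 ≤ q j)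
    (hsum : ∑ j, q j = k)
    (hcount : ∀ j, (Finset.univ.filter fun i : Fin n =>
        (i : ℕ) < k ∧ (σ i : ℕ) - (i : ℕ) = p j).card = q j)
    (hcover : ∀ i : Fin n, (i : ℕ) < k → ∃ j, (σ i : ℕ) - (i : ℕ) = p j)
    (hlast : p ⟨s - 1, by omega⟩ = n - k) :
    numOrbits σ =
      numOrbits ((List.ofFn fun j : Fin s =>
          ((rho (p ⟨s - 1, by omega⟩) (p j)
            (hp.monotone (by rw [Fin.le_def]; show (j : ℕ) ≤ s - 1; omega))) ^ (q j)
            : Equiv.Perm (Fin (p ⟨s - 1, by omega⟩)))).foldl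
        Equiv.trans (Equiv.refl _)) := by
  have hple : ∀ j, p j ≤ p ⟨s - 1, by omega⟩ := fun j =>
    hp.monotone (by rw [Fin.le_def]; show (j : ℕ) ≤ s - 1; omega)
  obtain ⟨hk1, hkn, hmono, hmono2⟩ := hσ
  rw [LorenzAux.T_flatten _ s p q hple, ← LorenzAux.list_eq σ hkn hmono p q hp hcount hcover]
  refine LorenzAux.main σ (by omega) hmono hmono2 (LorenzAux.gt_of σ hfpf hmono) ?_
  intro i hi
  obtain ⟨j, hj⟩ := hcover i hi
  rw [hj]
  exact hple j
end
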